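/- Let γ and γ̄ be admissible curves in G¹₃ defined on the same connected open interval I forming an equiform Bertrand pair: both equiform curvatures vanish identically (𝒦 ≡ 0 and 𝒦̄ ≡ 0) and the principal normals are parallel at corresponding points (N̄(x) is a scalar multiple of N(x) for all x). Then the pseudo-Galilean scalar product ⟨T̄(x), T(x)⟩ of the equiform tangent vectors is constant on I; i.e. the angle between the tangents at corresponding points is constant. -/

import Mathlib

noncomputable section

open Real

/-- Model of the pseudo-Galilean space `G¹₃` as `ℝ³`. -/
abbrev V3 := ℝ × ℝ × ℝ

/-- The pseudo-Galilean scalar product on `ℝ³`. -/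
def pgInner (u v : V3) : ℝ :=
  if u.1 ≠ 0 ∨ v.1 ≠ 0 then u.1 * v.1 else u.2.1 * v.2.1 - u.2.2 * v.2.2

/-- Curvature of the admissible curve `x ↦ (x, y x, z x)`. -/
def curv (y z : ℝ → ℝ) (x : ℝ) : ℝ :=
  Real.sqrt |(deriv (deriv y) x) ^ 2 - (deriv (deriv z) x) ^ 2|

/-- Torsion of the admissible curve `x ↦ (x, y x, z x)`. -/
def tors (y z : ℝ → ℝ) (x : ℝ) : ℝ :=
  (deriv (deriv y) x * deriv (deriv (deriv z)) x -
    deriv (deriv (deriv y)) x * deriv (deriv z) x) / (curv y z x) ^ 2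

/-- Radius of curvature `ρ = 1/κ`. -/
def rho (y z : ℝ → ℝ) (x : ℝ) : ℝ := 1 / curv y z x

/-- Equiform curvature `𝒦 = ρ'`. -/
def eqK (y z : ℝ → ℝ) (x : ℝ) : ℝ := deriv (rho y z) x

/-- Equiform torsion `𝒯 = ρ·τ`. -/
def eqT (y z : ℝ → ℝ) (x : ℝ) : ℝ := rho y z x * tors y z x

/-- Frenet tangent `e₁ = (1, y', z')`. -/
def e1 (y z : ℝ → ℝ) (x : ℝ) : V3 := (1, deriv y x, deriv z x)

/-- Frenet principal normal `e₂ = (1/κ)(0, y'', z'')`. -/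
def e2 (y z : ℝ → ℝ) (x : ℝ) : V3 :=
  (0, deriv (deriv y) x / curv y z x, deriv (deriv z) x / curv y z x)

/-- Frenet binormal `e₃ = (1/κ)(0, ε·z'', ε·y'')`. -/
def e3 (y z : ℝ → ℝ) (ε : ℝ) (x : ℝ) : V3 :=
  (0, ε * deriv (deriv z) x / curv y z x, ε * deriv (deriv y) x / curv y z x)

/-- Equiform tangent `T = ρ·e₁`. -/
def Tv (y z : ℝ → ℝ) (x : ℝ) : V3 := rho y z x • e1 y z x

/-- Equiform principal normal `N = ρ·e₂`. -/
def Nv (y z : ℝ → ℝ) (x : ℝ) : V3 := rho y z x • e2 y z x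

/-- Equiform binormal `B = ρ·e₃`. -/
def Bv (y z : ℝ → ℝ) (ε : ℝ) (x : ℝ) : V3 := rho y z x • e3 y z ε x

/-- Derivative with respect to the equiform parameter: `f° = ρ·f'`. -/
def eqD {E : Type*} [NormedAddCommGroup E] [NormedSpace ℝ E]
    (y z : ℝ → ℝ) (f : ℝ → E) (x : ℝ) : E := rho y z x • deriv f x

/-- `Q₁ = ρ⁻²·N`. -/
def Q1 (y z : ℝ → ℝ) (x : ℝ) : V3 := ((rho y z x) ^ (-2 : ℤ)) • Nv y z x

/-- `Q₂ = ρ⁻³·(−𝒦N + 𝒯B)`. -/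
def Q2 (y z : ℝ → ℝ) (ε : ℝ) (x : ℝ) : V3 :=
  ((rho y z x) ^ (-3 : ℤ)) • ((-(eqK y z x)) • Nv y z x + (eqT y z x) • Bv y z ε x)

/-- `Q₃ = ρ⁻⁴·[(2𝒦² + 𝒯² − 𝒦°)N + (𝒯° − 3𝒦𝒯)B]`. -/
def Q3 (y z : ℝ → ℝ) (ε : ℝ) (x : ℝ) : V3 :=
  ((rho y z x) ^ (-4 : ℤ)) •
    ((2 * (eqK y z x) ^ 2 + (eqT y z x) ^ 2 - eqD y z (eqK y z) x) • Nv y z x +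
      (eqD y z (eqT y z) x - 3 * eqK y z x * eqT y z x) • Bv y z ε x)

theorem curv_pos {y z : ℝ → ℝ} {x : ℝ}
    (h : (deriv (deriv y) x) ^ 2 - (deriv (deriv z) x) ^ 2 ≠ 0) : 0 < curv y z x :=
  Real.sqrt_pos.2 (abs_pos.2 h)

theorem rho_pos {y z : ℝ → ℝ} {x : ℝ}
    (h : (deriv (deriv y) x) ^ 2 - (deriv (deriv z) x) ^ 2 ≠ 0) : 0 < rho y z x :=
  one_div_pos.2 (curv_pos h)

theorem differentiableAt_rho {y z : ℝ → ℝ} {x : ℝ}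
    (hy : ContDiff ℝ (⊤ : ℕ∞) y) (hz : ContDiff ℝ (⊤ : ℕ∞) z)
    (h : (deriv (deriv y) x) ^ 2 - (deriv (deriv z) x) ^ 2 ≠ 0) :
    DifferentiableAt ℝ (rho y z) x := by
  have second_deriv {f : ℝ → ℝ} (hf : ContDiff ℝ (⊤ : ℕ∞) f) :
      DifferentiableAt ℝ (deriv (deriv f)) x :=
    (((contDiff_infty_iff_deriv.1 (contDiff_infty_iff_deriv.1 hf).2).2).differentiable
      (by simp)) x
  have hd : DifferentiableAt ℝ
      (fun t => (deriv (deriv y) t) ^ 2 - (deriv (deriv z) t) ^ 2) x :=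
    ((second_deriv hy).pow 2).sub ((second_deriv hz).pow 2)
  exact (differentiableAt_const 1).div ((hd.abs h).sqrt (abs_pos.2 h).ne') (curv_pos h).ne'

/-- A curve with vanishing equiform curvature has constant radius of curvature. -/
theorem rho_eq_of_eqK_eq_zero {I : Set ℝ} {y z : ℝ → ℝ}
    (hI : IsOpen I) (hIconn : IsPreconnected I)
    (hy : ContDiff ℝ (⊤ : ℕ∞) y) (hz : ContDiff ℝ (⊤ : ℕ∞) z)
    (hadm : ∀ x ∈ I, (deriv (deriv y) x) ^ 2 - (deriv (deriv z) x) ^ 2 ≠ 0)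
    (hK : ∀ x ∈ I, eqK y z x = 0) {x₁ x₂ : ℝ} (h₁ : x₁ ∈ I) (h₂ : x₂ ∈ I) :
    rho y z x₁ = rho y z x₂ :=
  hI.is_const_of_deriv_eq_zero hIconn
    (fun x hx => (differentiableAt_rho hy hz (hadm x hx)).differentiableWithinAt) hK h₁ h₂

/-- Equiform tangents are non-isotropic, so only their first coordinates enter the product. -/
theorem pgInner_Tv {y z ybar zbar : ℝ → ℝ} {x : ℝ}
    (h : (deriv (deriv ybar) x) ^ 2 - (deriv (deriv zbar) x) ^ 2 ≠ 0) :
    pgInner (Tv ybar zbar x) (Tv y z x) = rho ybar zbar x * rho y z x := by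
  simp [pgInner, Tv, e1, (rho_pos h).ne']

/-- for an equiform Bertrand pair (`𝒦 ≡ 0 ≡ 𝒦̄`, parallel principal normals),
the pseudo-Galilean scalar product of the equiform tangents is constant on `I`. -/
theorem pg_bertrand_tangent_angle_constant (I : Set ℝ) (y z ybar zbar : ℝ → ℝ)
    (hI : IsOpen I) (hIconn : IsPreconnected I)
    (hy : ContDiff ℝ (⊤ : ℕ∞) y) (hz : ContDiff ℝ (⊤ : ℕ∞) z)
    (hybar : ContDiff ℝ (⊤ : ℕ∞) ybar) (hzbar : ContDiff ℝ (⊤ : ℕ∞) zbar)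
    (hadm : ∀ x ∈ I, (deriv (deriv y) x) ^ 2 - (deriv (deriv z) x) ^ 2 ≠ 0)
    (hadmbar : ∀ x ∈ I, (deriv (deriv ybar) x) ^ 2 - (deriv (deriv zbar) x) ^ 2 ≠ 0)
    (hK : ∀ x ∈ I, eqK y z x = 0)
    (hKbar : ∀ x ∈ I, eqK ybar zbar x = 0)
    (hN : ∀ x ∈ I, ∃ c : ℝ, Nv ybar zbar x = c • Nv y z x) :
    ∀ x₁ ∈ I, ∀ x₂ ∈ I,
      pgInner (Tv ybar zbar x₁) (Tv y z x₁) = pgInner (Tv ybar zbar x₂) (Tv y z x₂) := by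
  intro x₁ h₁ x₂ h₂
  rw [pgInner_Tv (hadmbar x₁ h₁), pgInner_Tv (hadmbar x₂ h₂),
    rho_eq_of_eqK_eq_zero hI hIconn hy hz hadm hK h₁ h₂,
    rho_eq_of_eqK_eq_zero hI hIconn hybar hzbar hadmbar hKbar h₁ h₂]
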